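/- arXiv:2412.03444 — 2 statements merged into one kernel-verified Lean document; each statement's English description precedes it below -/
import Mathlib

section
/- Let ρ and σ be positive definite d×d density matrices, let α ∈ (0,1) and z ∈ (0,1). Then the minimum of F_{α,z}(ρ, UσU*) over all d×d unitary matrices U equals F_α^C(λ↓(ρ), λ↑(σ)), and this minimum is attained by some unitary U. -/
open Matrix
open scoped ComplexOrder

/-- Real power of a (Hermitian) matrix via functional calculus on eigenvalues,
with `(0:ℝ) ^ t = 0` for `t ≠ 0`. Returns `0` on non-Hermitian input. -/
noncomputable def mpow {d : ℕ} (A : Matrix (Fin d) (Fin d) ℂ) (t : ℝ) :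
    Matrix (Fin d) (Fin d) ℂ :=
  if hA : A.IsHermitian then
    (hA.eigenvectorUnitary : Matrix (Fin d) (Fin d) ℂ) *
      Matrix.diagonal (fun i => ((hA.eigenvalues i ^ t : ℝ) : ℂ)) *
      (star (hA.eigenvectorUnitary : Matrix (Fin d) (Fin d) ℂ))
  else 0

/-- The quantum α-z-fidelity
`F_{α,z}(ρ,σ) = (Tr[(σ^{(1-α)/(2z)} ρ^{α/z} σ^{(1-α)/(2z)})^z])^{1/α}`. -/
noncomputable def Faz {d : ℕ} (ρ σ : Matrix (Fin d) (Fin d) ℂ) (α z : ℝ) : ℝ :=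
  ((mpow (mpow σ ((1 - α) / (2 * z)) * mpow ρ (α / z) * mpow σ ((1 - α) / (2 * z))) z).trace.re)
    ^ (1 / α)

/-- The classical α-fidelity `F_α^C(p,q) = (Σ_i p_i^α q_i^{1-α})^{1/α}`. -/
noncomputable def FazC {d : ℕ} (p q : Fin d → ℝ) (α : ℝ) : ℝ :=
  (∑ i, p i ^ α * q i ^ (1 - α)) ^ (1 / α)

/-- The vector `p` rearranged in increasing order. -/
noncomputable def sortUp {d : ℕ} (p : Fin d → ℝ) : Fin d → ℝ :=
  p ∘ Tuple.sort p

/-- The vector `p` rearranged in decreasing order. -/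
noncomputable def sortDown {d : ℕ} (p : Fin d → ℝ) : Fin d → ℝ :=
  fun i => sortUp p i.rev

/-- `λ↑(A)`: the eigenvalues of a Hermitian matrix in increasing order. -/
noncomputable def eigUp {d : ℕ} {A : Matrix (Fin d) (Fin d) ℂ} (hA : A.IsHermitian) :
    Fin d → ℝ := sortUp hA.eigenvalues

/-- `λ↓(A)`: the eigenvalues of a Hermitian matrix in decreasing order. -/
noncomputable def eigDown {d : ℕ} {A : Matrix (Fin d) (Fin d) ℂ} (hA : A.IsHermitian) :
    Fin d → ℝ := sortDown hA.eigenvalues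

/-!
The idea is variational. Write `B = σ^{(1-α)/(2z)}` and `R = ρ^{α/z}`. On the compact orbit
`U R U*` the functional `Tr (B (U R U*) B)^z` attains its minimum. At a minimiser, still called `R`,
put `C = B (B R B)^{z-1} B`; the derivative along the one-parameter group generated by the
skew-adjoint commutator `K = [C, R]` is `z Tr (K K*)`, so `K = 0`, and this forces `B` and `R` to
commute. For commuting arguments the functional is `Tr ρ^α σ^{1-α}`, which is a doubly stochastic
average of products of eigenvalues. By Birkhoff's theorem and the rearrangement inequality it is at
least the sum of oppositely ordered products, and a permutation of eigenbases attains that sum.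
-/

section CStarAlgebra

variable {A : Type*} [CStarAlgebra A] [PartialOrder A] [StarOrderedRing A] {a b : A}

theorem commute_of_commute_rpow {t : ℝ} (ht : t ≠ 0) (ha : IsStrictlyPositive a)
    (h : Commute (a ^ t) b) : Commute a b := by
  rw [← CFC.rpow_rpow_inv a t ht]
  exact h.cfc_nnreal _

theorem rpow_eq_exp_smul_log (t : ℝ) (ha : IsStrictlyPositive a) :
    a ^ t = NormedSpace.exp (t • CFC.log a) := by
  have hpos : ∀ x ∈ spectrum ℝ a, 0 < x := fun x hx ↦ ha.spectrum_pos hx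
  have hlog : ContinuousOn Real.log (spectrum ℝ a) :=
    Real.continuousOn_log.mono fun x hx ↦ (hpos x hx).ne'
  rw [CFC.log, ← cfc_smul t Real.log a, ← CFC.real_exp_eq_normedSpace_exp (cfc_predicate _ a),
    ← cfc_comp' Real.exp (fun x ↦ t • Real.log x) a, CFC.rpow_eq_cfc_real]
  exact cfc_congr fun x hx ↦ by simp [Real.rpow_def_of_pos (hpos x hx), mul_comm]

theorem mul_rpow_of_commute (t : ℝ) (ha : IsStrictlyPositive a) (hb : IsStrictlyPositive b)
    (hab : Commute a b) : (a * b) ^ t = a ^ t * b ^ t := by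
  have hlog : Commute (CFC.log a) (CFC.log b) := (hab.cfc_real _).symm.cfc_real _ |>.symm
  let +nondep : NormedAlgebra ℚ A := .restrictScalars ℚ ℂ A
  have hsum : CFC.log (a * b) = CFC.log a + CFC.log b := by
    rw [← CFC.log_exp (CFC.log a + CFC.log b) (by cfc_tac),
      NormedSpace.exp_add_of_commute hlog, CFC.exp_log a, CFC.exp_log b]
  rw [rpow_eq_exp_smul_log t ((ha.commute_iff hb).1 hab), rpow_eq_exp_smul_log t ha,
    rpow_eq_exp_smul_log t hb, hsum, smul_add,
    NormedSpace.exp_add_of_commute ((hlog.smul_left t).smul_right t)]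

theorem isStrictlyPositive_conj (ha_unit : IsUnit a) (ha : IsSelfAdjoint a)
    (hb : IsStrictlyPositive b) : IsStrictlyPositive (a * b * a) := by
  simpa [ha.star_eq] using ha_unit.isStrictlyPositive_star_right_conjugate_iff.2 hb

theorem commute_of_commute_conj_rpow {p : ℝ} (hp : p + 1 ≠ 0) (ha : IsStrictlyPositive a)
    (hb : IsStrictlyPositive b) (h : Commute (a * (a * b * a) ^ p * a) b) : Commute a b := by
  -- With `x = a b a`, the hypothesis says that `x ^ (p + 1)` commutes with `a ^ 2`.
  set x := a * b * a with hx
  have hx_pos : IsStrictlyPositive x := isStrictlyPositive_conj ha.isUnit ha.isSelfAdjoint hb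
  have hl : x ^ p * x = x ^ (p + 1) := by
    rw [CFC.rpow_add hx_pos.isUnit, CFC.rpow_one x]
  have hr : x * x ^ p = x ^ (p + 1) := by
    rw [add_comm, CFC.rpow_add hx_pos.isUnit, CFC.rpow_one x]
  have hpow : Commute (x ^ (p + 1)) (a ^ 2) := by
    calc x ^ (p + 1) * a ^ 2 = a * (b * (a * x ^ p * a)) * a := by rw [← hr, hx]; noncomm_ring
      _ = a * (a * x ^ p * a * b) * a := by rw [h.eq]
      _ = a ^ 2 * x ^ (p + 1) := by rw [← hl, hx]; noncomm_ring
  have hxa : Commute x a := by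
    refine (commute_of_commute_rpow (t := 2) two_ne_zero ha ?_).symm
    rw [show (2 : ℝ) = (2 : ℕ) by norm_num, CFC.rpow_natCast a 2]
    exact (commute_of_commute_rpow hp hx_pos hpow).symm
  refine ha.isUnit.mul_right_cancel (ha.isUnit.mul_left_cancel ?_)
  simpa only [hx, mul_assoc] using hxa.eq.symm

theorem isStrictlyPositive_unitary_conj {u : A} (hu : u ∈ unitary A) (ha : IsStrictlyPositive a) :
    IsStrictlyPositive (u * a * star u) :=
  (Unitary.isUnit_coe (U := ⟨u, hu⟩)).isStrictlyPositive_star_right_conjugate_iff.2 ha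

theorem unitary_conj_rpow {u : A} (hu : u ∈ unitary A) (ha : IsStrictlyPositive a) (t : ℝ) :
    (u * a * star u) ^ t = u * a ^ t * star u := by
  have hu_pos := isStrictlyPositive_unitary_conj hu ha
  have hcont : ContinuousOn (fun x : ℝ ↦ x ^ t) (spectrum ℝ a) := fun x hx ↦
    (Real.continuousAt_rpow_const x t (.inl (ha.spectrum_pos hx).ne')).continuousWithinAt
  have hu_cont : Continuous (Unitary.conjStarAlgAut ℂ A ⟨u, hu⟩) := by
    change Continuous fun x ↦ u * x * star u
    fun_prop
  rw [CFC.rpow_eq_cfc_real, CFC.rpow_eq_cfc_real]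
  exact (StarAlgHomClass.map_cfc (Unitary.conjStarAlgAut ℂ A ⟨u, hu⟩) (fun x : ℝ ↦ x ^ t) a hcont
    hu_cont ha.isSelfAdjoint hu_pos.isSelfAdjoint).symm

end CStarAlgebra

section Overlap

variable {n 𝕜 : Type*} [Fintype n] [DecidableEq n] [RCLike 𝕜] {A B : Matrix n n 𝕜}

/-- The matrix of squared moduli `‖Uᵢⱼ‖²`; it is doubly stochastic when `U` is unitary. -/
def unistochastic (U : Matrix n n 𝕜) : Matrix n n ℝ := U.map fun u ↦ ‖u‖ ^ 2

theorem unistochastic_mem_doublyStochastic {U : Matrix n n 𝕜} (hU : U ∈ unitaryGroup n 𝕜) :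
    unistochastic U ∈ doublyStochastic ℝ n := by
  refine mem_doublyStochastic_iff_sum.2 ⟨fun i j ↦ sq_nonneg _, fun i ↦ ?_, fun j ↦ ?_⟩
  · have := congr_fun₂ (mem_unitaryGroup_iff.1 hU) i i
    simp only [mul_apply, star_apply, RCLike.star_def, RCLike.mul_conj, one_apply_eq] at this
    exact_mod_cast this
  · have := congr_fun₂ (mem_unitaryGroup_iff'.1 hU) j j
    simp only [mul_apply, star_apply, RCLike.star_def, RCLike.conj_mul, one_apply_eq] at this
    exact_mod_cast this

theorem trace_conj_diagonal_mul_conj_diagonal (V W : Matrix n n 𝕜) (a b : n → ℝ) :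
    (V * diagonal (fun i ↦ (a i : 𝕜)) * star V * (W * diagonal (fun i ↦ (b i : 𝕜)) * star W)).trace
      = ∑ i, ∑ j, ((a i * b j * unistochastic (star V * W) i j : ℝ) : 𝕜) := by
  have hcycle : (V * diagonal (fun i ↦ (a i : 𝕜)) * star V *
      (W * diagonal (fun i ↦ (b i : 𝕜)) * star W)).trace =
      (diagonal (fun i ↦ (a i : 𝕜)) * (star V * W) * diagonal (fun i ↦ (b i : 𝕜)) *
        star (star V * W)).trace := by
    rw [star_mul, star_star]
    simp only [mul_assoc]
    rw [trace_mul_comm V]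
    simp only [mul_assoc]
  rw [hcycle, trace]
  refine Finset.sum_congr rfl fun i _ ↦ ?_
  rw [diag_apply, mul_apply]
  refine Finset.sum_congr rfl fun j _ ↦ ?_
  simp only [mul_diagonal, diagonal_mul, star_apply (star V * W), RCLike.star_def, unistochastic,
    map_apply]
  push_cast
  rw [← RCLike.mul_conj]
  ring

/-- The overlaps `‖⟨vᵢ, wⱼ⟩‖²` between the eigenbases of two Hermitian matrices. -/
noncomputable def eigenbasisOverlap (hA : A.IsHermitian) (hB : B.IsHermitian) : Matrix n n ℝ :=
  unistochastic (star (hA.eigenvectorUnitary : Matrix n n 𝕜) *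
    (hB.eigenvectorUnitary : Matrix n n 𝕜))

theorem eigenbasisOverlap_mem_doublyStochastic (hA : A.IsHermitian) (hB : B.IsHermitian) :
    eigenbasisOverlap hA hB ∈ doublyStochastic ℝ n :=
  unistochastic_mem_doublyStochastic (star hA.eigenvectorUnitary * hB.eigenvectorUnitary).2

theorem cfc_eq_conj_diagonal (hA : A.IsHermitian) (f : ℝ → ℝ) :
    cfc f A = hA.eigenvectorUnitary * diagonal (fun i ↦ (f (hA.eigenvalues i) : 𝕜)) *
      star (hA.eigenvectorUnitary : Matrix n n 𝕜) := by
  rw [hA.cfc_eq]; rfl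

theorem re_trace_cfc_mul_cfc (hA : A.IsHermitian) (hB : B.IsHermitian) (f g : ℝ → ℝ) :
    RCLike.re (cfc f A * cfc g B).trace = ∑ i, ∑ j,
      f (hA.eigenvalues i) * g (hB.eigenvalues j) * eigenbasisOverlap hA hB i j := by
  rw [cfc_eq_conj_diagonal hA, cfc_eq_conj_diagonal hB, trace_conj_diagonal_mul_conj_diagonal]
  simp only [map_sum, RCLike.ofReal_re, eigenbasisOverlap]

end Overlap

section Klein

variable {n 𝕜 : Type*} [Fintype n] [DecidableEq n] [RCLike 𝕜] {X Y : Matrix n n 𝕜}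

theorem add_mul_sub_le_of_convexOn {s : Set ℝ} {f : ℝ → ℝ} {f' x y : ℝ} (hf : ConvexOn ℝ s f)
    (hx : x ∈ s) (hy : y ∈ s) (hf' : HasDerivAt f f' x) : f x + f' * (y - x) ≤ f y := by
  rcases lt_trichotomy x y with h | rfl | h
  · have := hf.le_slope_of_hasDerivAt hx hy h hf'
    rw [slope_def_field, le_div_iff₀ (sub_pos.2 h)] at this
    linarith
  · simp
  · have := hf.slope_le_of_hasDerivAt hy hx h hf'
    rw [slope_def_field, div_le_iff₀ (sub_pos.2 h)] at this
    linarith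

/-- Klein's inequality: a doubly stochastic average, over pairs of eigenvalues, of the tangent-line
inequality for `f`. -/
theorem re_trace_cfc_add_le_of_convexOn {s : Set ℝ} {f f' : ℝ → ℝ} (hf : ConvexOn ℝ s f)
    (hf' : ∀ x ∈ s, HasDerivAt f (f' x) x) (hX : X.IsHermitian) (hY : Y.IsHermitian)
    (hXs : spectrum ℝ X ⊆ s) (hYs : spectrum ℝ Y ⊆ s) :
    RCLike.re (cfc f X).trace + RCLike.re (cfc f' X * (Y - X)).trace ≤
      RCLike.re (cfc f Y).trace := by
  have hfX : cfc f X = cfc f X * cfc (fun _ : ℝ ↦ (1 : ℝ)) Y := by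
    rw [cfc_const_one ℝ Y, mul_one]
  have hf'_cont : ContinuousOn f' (spectrum ℝ X) := finite_real_spectrum.continuousOn _
  have hf'X : cfc f' X * X = cfc (fun x ↦ f' x * x) X * cfc (fun _ : ℝ ↦ (1 : ℝ)) Y := by
    rw [cfc_const_one ℝ Y, mul_one, cfc_mul f' (fun x ↦ x) X, cfc_id' ℝ X]
  have hf'XY : cfc f' X * Y = cfc f' X * cfc (fun x : ℝ ↦ x) Y := by
    rw [cfc_id' ℝ Y]
  have hfY : cfc f Y = cfc (fun _ : ℝ ↦ (1 : ℝ)) X * cfc f Y := by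
    rw [cfc_const_one ℝ X, one_mul]
  rw [mul_sub, hf'X, hf'XY, hfX, hfY, trace_sub, map_sub]
  simp only [re_trace_cfc_mul_cfc hX hY, ← Finset.sum_sub_distrib, ← Finset.sum_add_distrib]
  refine Finset.sum_le_sum fun i _ ↦ Finset.sum_le_sum fun j _ ↦ ?_
  have hxi := hXs (hX.eigenvalues_mem_spectrum_real i)
  have htangent := add_mul_sub_le_of_convexOn hf hxi
    (hYs (hY.eigenvalues_mem_spectrum_real j)) (hf' _ hxi)
  have hw : 0 ≤ eigenbasisOverlap hX hY i j :=
    nonneg_of_mem_doublyStochastic (eigenbasisOverlap_mem_doublyStochastic hX hY)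
  linear_combination eigenbasisOverlap hX hY i j * htangent

end Klein

section Rearrangement

variable {n 𝕜 : Type*} [Fintype n] [DecidableEq n] [RCLike 𝕜] {A B : Matrix n n 𝕜}

theorem sum_mul_le_sum_mul_of_mem_doublyStochastic {a b : n → ℝ} (hab : Antivary a b)
    {M : Matrix n n ℝ} (hM : M ∈ doublyStochastic ℝ n) :
    ∑ i, a i * b i ≤ a ⬝ᵥ M *ᵥ b := by
  obtain ⟨w, hw, hw1, rfl⟩ := exists_eq_sum_perm_of_mem_doublyStochastic hM
  calc ∑ i, a i * b i = ∑ π, w π * ∑ i, a i * b i := by rw [← Finset.sum_mul, hw1, one_mul]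
    _ ≤ ∑ π : Equiv.Perm n, w π * ∑ i, a i * b (π i) :=
      Finset.sum_le_sum fun π _ ↦
        mul_le_mul_of_nonneg_left hab.sum_mul_le_sum_mul_comp_perm (hw π)
    _ = a ⬝ᵥ (∑ π : Equiv.Perm n, w π • π.permMatrix ℝ) *ᵥ b := by
      simp only [sum_mulVec, dotProduct_sum, smul_mulVec, dotProduct_smul, permMatrix_mulVec,
        smul_eq_mul]
      rfl

theorem sum_mul_le_re_trace_cfc_mul_cfc (hA : A.IsHermitian) (hB : B.IsHermitian)
    {f g : ℝ → ℝ} {s t : Equiv.Perm n}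
    (h : Antivary (f ∘ hA.eigenvalues ∘ s) (g ∘ hB.eigenvalues ∘ t)) :
    ∑ i, f (hA.eigenvalues (s i)) * g (hB.eigenvalues (t i)) ≤
      RCLike.re (cfc f A * cfc g B).trace := by
  have hM := reindex_mem_doublyStochastic (e₁ := s.symm) (e₂ := t.symm)
    (eigenbasisOverlap_mem_doublyStochastic hA hB)
  refine (sum_mul_le_sum_mul_of_mem_doublyStochastic h hM).trans_eq ?_
  rw [re_trace_cfc_mul_cfc hA hB, ← Equiv.sum_comp s, dotProduct]
  refine Finset.sum_congr rfl fun i _ ↦ ?_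
  rw [← Equiv.sum_comp t, mulVec, dotProduct, Finset.mul_sum]
  refine Finset.sum_congr rfl fun j _ ↦ ?_
  simp only [Function.comp_apply, reindex_apply, submatrix_apply, Equiv.symm_symm]
  ring

theorem permMatrix_mul_diagonal_mul_star (π : Equiv.Perm n) (d : n → 𝕜) :
    π.permMatrix 𝕜 * diagonal d * star (π.permMatrix 𝕜) = diagonal (d ∘ π) := by
  rw [star_eq_conjTranspose, conjTranspose_permMatrix]
  ext i j
  simp [PEquiv.toMatrix_toPEquiv_mul, PEquiv.mul_toMatrix_toPEquiv, diagonal_apply,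
    Equiv.Perm.inv_def]

theorem permMatrix_mem_unitaryGroup (π : Equiv.Perm n) : π.permMatrix 𝕜 ∈ unitaryGroup n 𝕜 := by
  rw [mem_unitaryGroup_iff, star_eq_conjTranspose, conjTranspose_permMatrix, ← permMatrix_mul]
  simp

theorem exists_unitary_conj_cfc_eq (hA : A.IsHermitian) (hB : B.IsHermitian) (π : Equiv.Perm n) :
    ∃ U ∈ unitaryGroup n 𝕜, ∀ g : ℝ → ℝ, U * cfc g B * star U =
      Unitary.conjStarAlgAut 𝕜 _ hA.eigenvectorUnitary
        (diagonal fun i ↦ (g (hB.eigenvalues (π i)) : 𝕜)) := by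
  let P : unitaryGroup n 𝕜 := ⟨π.permMatrix 𝕜, permMatrix_mem_unitaryGroup π⟩
  let U := hA.eigenvectorUnitary * P * star hB.eigenvectorUnitary
  refine ⟨U, U.2, fun g ↦ ?_⟩
  change Unitary.conjStarAlgAut 𝕜 _ U (cfc g B) = _
  rw [hB.cfc_eq, IsHermitian.cfc, ← StarAlgEquiv.mul_apply, ← map_mul, mul_assoc,
    Unitary.star_mul_self, mul_one, map_mul, StarAlgEquiv.mul_apply, Unitary.conjStarAlgAut_apply P]
  exact congrArg _ (permMatrix_mul_diagonal_mul_star π _)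

theorem exists_unitary_commute_conj_trace_cfc_mul_cfc_eq_sum (hA : A.IsHermitian)
    (hB : B.IsHermitian) (π : Equiv.Perm n) :
    ∃ U ∈ unitaryGroup n 𝕜, Commute A (U * B * star U) ∧ ∀ f g : ℝ → ℝ,
      (cfc f A * (U * cfc g B * star U)).trace =
        ∑ i, ((f (hA.eigenvalues i) * g (hB.eigenvalues (π i)) : ℝ) : 𝕜) := by
  obtain ⟨U, hU, hcfc⟩ := exists_unitary_conj_cfc_eq hA hB π
  refine ⟨U, hU, ?_, fun f g ↦ ?_⟩
  · have hUB := hcfc fun x ↦ x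
    rw [cfc_id' ℝ B] at hUB
    have hdiag := (commute_diagonal (RCLike.ofReal ∘ hA.eigenvalues)
      fun i ↦ (hB.eigenvalues (π i) : 𝕜)).map (Unitary.conjStarAlgAut 𝕜 _ hA.eigenvectorUnitary)
    rwa [← hA.spectral_theorem, ← hUB] at hdiag
  · rw [hcfc, hA.cfc_eq, IsHermitian.cfc, ← map_mul, diagonal_mul_diagonal,
      Unitary.conjStarAlgAut_apply, trace_mul_cycle, Unitary.coe_star_mul_self, one_mul,
      trace_diagonal]
    simp

end Rearrangement

section TraceDerivative

open scoped MatrixOrder Matrix.Norms.L2Operator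
open Asymptotics Filter Topology

variable {n : Type*} [Fintype n] [DecidableEq n]

/-- The real part of the trace as a continuous real-linear functional, for use in calculus. -/
noncomputable def reTrace : Matrix n n ℂ →L[ℝ] ℝ :=
  Complex.reCLM ∘L (traceLinearMap n ℝ ℂ).toContinuousLinearMap

omit [DecidableEq n] in
theorem reTrace_apply (A : Matrix n n ℂ) : reTrace A = A.trace.re := rfl

theorem hasDerivAt_reTrace_cfc_of_convexOn {s : Set ℝ} {f f' : ℝ → ℝ} (hs : IsOpen s)
    (hf : ConvexOn ℝ s f) (hf' : ∀ x ∈ s, HasDerivAt f (f' x) x) (hf'_cont : ContinuousOn f' s)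
    {X : ℝ → Matrix n n ℂ} {X' : Matrix n n ℂ} {t₀ : ℝ} (hX : HasDerivAt X X' t₀)
    (hX_herm : ∀ t, (X t).IsHermitian) (hXs : ∀ t, spectrum ℝ (X t) ⊆ s) :
    HasDerivAt (fun t ↦ reTrace (cfc f (X t))) (reTrace (cfc f' (X t₀) * X')) t₀ := by
  have hcont : Tendsto (fun t ↦ cfc f' (X t) - cfc f' (X t₀)) (𝓝 t₀) (𝓝 0) := by
    have hcfc : ContinuousOn (cfc f') {A : Matrix n n ℂ | A.IsHermitian ∧ spectrum ℝ A ⊆ s} :=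
      continuousOn_id.cfc_of_mem_nhdsSet f'
        (hs.mem_nhdsSet.2 (Set.iUnion₂_subset fun A hA ↦ hA.2)) (fun A hA ↦ hA.1) hf'_cont
    have : ContinuousAt (fun t ↦ cfc f' (X t)) t₀ :=
      (hcfc (X t₀) ⟨hX_herm t₀, hXs t₀⟩).tendsto.comp
        (tendsto_nhdsWithin_iff.2 ⟨hX.continuousAt, .of_forall fun t ↦ ⟨hX_herm t, hXs t⟩⟩)
    simpa using this.sub_const (cfc f' (X t₀))
  -- Klein's inequality in both directions squeezes the remainder of the trace between `0` and this.
  have hgap : (fun t ↦ reTrace ((cfc f' (X t) - cfc f' (X t₀)) * (X t - X t₀)))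
      =o[𝓝 t₀] fun t ↦ t - t₀ := by
    refine ((reTrace : Matrix n n ℂ →L[ℝ] ℝ).isBigO_comp _ _).trans_isLittleO ?_
    simpa using ((isLittleO_one_iff ℝ).2 hcont).mul_isBigO hX.isBigO_sub
  have hklein : (fun t ↦ reTrace (cfc f (X t)) - reTrace (cfc f (X t₀)) -
      reTrace (cfc f' (X t₀) * (X t - X t₀))) =o[𝓝 t₀] fun t ↦ t - t₀ := by
    refine (isBigO_of_le _ fun t ↦ ?_).trans_isLittleO hgap
    have hlower := re_trace_cfc_add_le_of_convexOn hf hf' (hX_herm t₀) (hX_herm t) (hXs t₀) (hXs t)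
    have hupper := re_trace_cfc_add_le_of_convexOn hf hf' (hX_herm t) (hX_herm t₀) (hXs t) (hXs t₀)
    rw [← neg_sub (X t), mul_neg, trace_neg, map_neg] at hupper
    simp only [RCLike.re_to_complex, ← reTrace_apply] at hlower hupper
    rw [sub_mul, map_sub, Real.norm_of_nonneg (by linarith), Real.norm_of_nonneg (by linarith)]
    linarith
  have hlin : (fun t ↦ reTrace (cfc f' (X t₀) * (X t - X t₀ - (t - t₀) • X')))
      =o[𝓝 t₀] fun t ↦ t - t₀ :=
    ((reTrace ∘L ContinuousLinearMap.mul ℝ _ (cfc f' (X t₀))).isBigO_comp _ _).trans_isLittleO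
      hX.isLittleO
  refine .of_isLittleO <| (hklein.add hlin).congr_left fun t ↦ ?_
  simp only [mul_sub, mul_smul_comm, map_sub, map_smul]
  ring

theorem convexOn_const_mul_rpow {c z : ℝ} (hcz : 0 ≤ c * (z * (z - 1))) :
    ConvexOn ℝ (Set.Ioi 0) fun x : ℝ ↦ c * x ^ z := by
  have hderiv (a r : ℝ) {x : ℝ} (hx : x ∈ Set.Ioi (0 : ℝ)) :
      HasDerivAt (fun x ↦ a * x ^ r) (a * r * x ^ (r - 1)) x := by
    simpa only [mul_assoc] using (Real.hasDerivAt_rpow_const (.inl (ne_of_gt hx))).const_mul a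
  refine convexOn_of_hasDerivWithinAt2_nonneg (convex_Ioi 0)
    (fun x hx ↦ (hderiv c z hx).continuousAt.continuousWithinAt) ?_ ?_ ?_
    (f' := fun x ↦ c * z * x ^ (z - 1)) (f'' := fun x ↦ c * z * (z - 1) * x ^ (z - 1 - 1))
  all_goals simp only [interior_Ioi]
  · exact fun x hx ↦ (hderiv c z hx).hasDerivWithinAt
  · exact fun x hx ↦ (hderiv (c * z) (z - 1) hx).hasDerivWithinAt
  · intro x hx
    rw [mul_assoc c]
    exact mul_nonneg hcz (Real.rpow_nonneg (le_of_lt hx) _)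

theorem hasDerivAt_reTrace_rpow {X : ℝ → Matrix n n ℂ} {X' : Matrix n n ℂ} {t₀ : ℝ} (z : ℝ)
    (hX : HasDerivAt X X' t₀) (hX_pos : ∀ t, IsStrictlyPositive (X t)) :
    HasDerivAt (fun t ↦ reTrace (X t ^ z)) (z * reTrace (X t₀ ^ (z - 1) * X')) t₀ := by
  -- `x ^ z` is convex or concave according to `z`; the sign `c` reduces both cases to convexity.
  obtain ⟨c, hc, hcz⟩ : ∃ c : ℝ, c ≠ 0 ∧ 0 ≤ c * (z * (z - 1)) := by
    rcases le_total 0 (z * (z - 1)) with h | h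
    · exact ⟨1, one_ne_zero, by linarith⟩
    · exact ⟨-1, by norm_num, by linarith⟩
  have hderiv : ∀ x ∈ Set.Ioi (0 : ℝ), HasDerivAt (fun x ↦ c * x ^ z) (c * z * x ^ (z - 1)) x :=
    fun x hx ↦ by
      simpa only [mul_assoc] using (Real.hasDerivAt_rpow_const (.inl (ne_of_gt hx))).const_mul c
  have hcont : ContinuousOn (fun x : ℝ ↦ c * z * x ^ (z - 1)) (Set.Ioi 0) := fun x hx ↦
    ((Real.continuousAt_rpow_const x _ (.inl (ne_of_gt hx))).const_mul _).continuousWithinAt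
  have hcfc (a r : ℝ) (t : ℝ) : cfc (fun x ↦ a * x ^ r) (X t) = a • X t ^ r := by
    rw [CFC.rpow_eq_cfc_real, cfc_const_mul a _ (X t) (finite_real_spectrum.continuousOn _)]
  have hmul := hasDerivAt_reTrace_cfc_of_convexOn isOpen_Ioi (convexOn_const_mul_rpow hcz) hderiv
    hcont hX (fun t ↦ (hX_pos t).isSelfAdjoint) (fun t x hx ↦ (hX_pos t).spectrum_pos hx)
  simp only [hcfc, map_smul, smul_mul_assoc] at hmul
  simpa [hc, mul_assoc] using hmul.const_mul c⁻¹

end TraceDerivative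

section UnitaryOrbit

open scoped MatrixOrder Matrix.Norms.L2Operator
open NormedSpace

theorem hasDerivAt_exp_smul_conj {A : Type*} [NormedRing A] [NormedAlgebra ℝ A] [CompleteSpace A]
    [StarRing A] [ContinuousStar A] [StarModule ℝ A] (k a : A) :
    HasDerivAt (fun t : ℝ ↦ exp (t • k) * a * star (exp (t • k))) (k * a + a * star k) 0 := by
  have hexp : HasDerivAt (fun t : ℝ ↦ exp (t • k)) k 0 := by
    simpa using hasDerivAt_exp_smul_const k (0 : ℝ)
  simpa using! (hexp.mul_const a).mul hexp.star

variable {n : Type*} [Fintype n] [DecidableEq n] {B R : Matrix n n ℂ} {z : ℝ}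

omit [DecidableEq n] in
theorem eq_zero_of_reTrace_mul_star_self_eq_zero {K : Matrix n n ℂ}
    (h : reTrace (K * star K) = 0) : K = 0 := by
  have hnonneg := (posSemidef_self_mul_conjTranspose K).trace_nonneg
  exact trace_mul_conjTranspose_self_eq_zero_iff.1
    (Complex.ext h (Complex.nonneg_iff.1 hnonneg).2.symm)

theorem commute_of_reTrace_rpow_le_on_orbit (hz : z ≠ 0) (hB : IsStrictlyPositive B)
    (hR : IsStrictlyPositive R)
    (hmin : ∀ U ∈ unitaryGroup n ℂ,
      reTrace ((B * R * B) ^ z) ≤ reTrace ((B * (U * R * star U) * B) ^ z)) :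
    Commute B R := by
  set C := B * (B * R * B) ^ (z - 1) * B with hC
  set K := C * R - R * C with hK
  have hC_star : star C = C :=
    (isStrictlyPositive_conj hB.isUnit hB.isSelfAdjoint
      ((isStrictlyPositive_conj hB.isUnit hB.isSelfAdjoint hR).rpow _ _)).isSelfAdjoint
  have hK_star : star K = -K := by
    simp [hK, hC_star, hR.isSelfAdjoint.star_eq]
  let +nondep : NormedAlgebra ℚ (Matrix n n ℂ) := .restrictScalars ℚ ℂ _
  have hU (t : ℝ) : exp (t • K) ∈ unitaryGroup n ℂ :=
    exp_mem_unitary_of_mem_skewAdjoint (skewAdjoint.smul_mem t hK_star)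
  have hderiv := hasDerivAt_reTrace_rpow z
    (((hasDerivAt_exp_smul_conj K R).const_mul B).mul_const B)
    fun t ↦ isStrictlyPositive_conj hB.isUnit hB.isSelfAdjoint
      (isStrictlyPositive_unitary_conj (hU t) hR)
  have hlocal : IsLocalMin
      (fun t : ℝ ↦ reTrace ((B * (exp (t • K) * R * star (exp (t • K))) * B) ^ z)) 0 :=
    .of_forall fun t ↦ by simpa using hmin _ (hU t)
  have hcrit := (mul_eq_zero_iff_left hz).1 (hlocal.hasDerivAt_eq_zero hderiv)
  have htrace : ((B * R * B) ^ (z - 1) * (B * (K * R + R * star K) * B)).trace =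
      (K * star K).trace := by
    calc ((B * R * B) ^ (z - 1) * (B * (K * R + R * star K) * B)).trace
        = (C * (K * R + R * star K)).trace := by
          rw [← mul_assoc, trace_mul_comm, hC]
          simp only [mul_assoc]
      _ = (C * K * R).trace - (C * R * K).trace := by
          simp [hK_star, mul_add, mul_assoc, sub_eq_add_neg]
      _ = (K * star K).trace := by
          rw [trace_mul_cycle, hK_star, ← neg_mul_comm, ← trace_sub, ← sub_mul, hK, neg_sub]
  have hK_zero : K = 0 := eq_zero_of_reTrace_mul_star_self_eq_zero <| by
    simpa [reTrace_apply, htrace] using hcrit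
  exact commute_of_commute_conj_rpow (by simpa using hz) hB hR (sub_eq_zero.1 hK_zero)

theorem isCompact_unitaryGroup : IsCompact (unitaryGroup n ℂ : Set (Matrix n n ℂ)) := by
  refine Metric.isCompact_of_isClosed_isBounded isClosed_unitary
    (isBounded_iff_forall_norm_le.2 ⟨‖(1 : Matrix n n ℂ)‖, fun U hU ↦ ?_⟩)
  simpa using (CStarRing.norm_mem_unitary_mul 1 hU).le

theorem exists_unitary_commute_reTrace_rpow_le (hz : z ≠ 0) (hB : IsStrictlyPositive B)
    (hR : IsStrictlyPositive R) :
    ∃ U ∈ unitaryGroup n ℂ, Commute B (U * R * star U) ∧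
      reTrace ((B * (U * R * star U) * B) ^ z) ≤ reTrace ((B * R * B) ^ z) := by
  have hpos {U : Matrix n n ℂ} (hU : U ∈ unitaryGroup n ℂ) : IsStrictlyPositive (U * R * star U) :=
    isStrictlyPositive_unitary_conj hU hR
  have hcont : ContinuousOn (fun U : Matrix n n ℂ ↦ reTrace ((B * (U * R * star U) * B) ^ z))
      (unitaryGroup n ℂ) :=
    reTrace.continuous.comp_continuousOn <| (CFC.continuousOn_rpow z).comp (by fun_prop)
      fun U hU ↦ isStrictlyPositive_conj hB.isUnit hB.isSelfAdjoint (hpos hU)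
  obtain ⟨U, hU, hmin⟩ := isCompact_unitaryGroup.exists_isMinOn ⟨1, one_mem _⟩ hcont
  refine ⟨U, hU, commute_of_reTrace_rpow_le_on_orbit hz hB (hpos hU) fun W hW ↦ ?_, ?_⟩
  · simpa [mul_assoc] using hmin (mul_mem hW hU)
  · simpa using hmin (one_mem _)

end UnitaryOrbit

section AlphaZ

open scoped MatrixOrder Matrix.Norms.L2Operator

variable {n : Type*} [Fintype n] [DecidableEq n] {ρ σ : Matrix n n ℂ} {α z : ℝ}

/-- The trace functional `Tr[(σ^{(1-α)/(2z)} ρ^{α/z} σ^{(1-α)/(2z)})^z]`, of which the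
`α`-`z`-fidelity is the power `1/α`. -/
noncomputable def alphaZTrace (ρ σ : Matrix n n ℂ) (α z : ℝ) : ℝ :=
  reTrace ((σ ^ ((1 - α) / (2 * z)) * ρ ^ (α / z) * σ ^ ((1 - α) / (2 * z))) ^ z)

theorem alphaZTrace_of_commute (hα₀ : α ≠ 0) (hα₁ : α ≠ 1) (hz : z ≠ 0)
    (hρ : IsStrictlyPositive ρ) (hσ : IsStrictlyPositive σ) (h : Commute ρ σ) :
    alphaZTrace ρ σ α z = reTrace (ρ ^ α * σ ^ (1 - α)) := by
  set s := (1 - α) / (2 * z) with hs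
  set r := α / z
  have hcomm (x y : ℝ) : Commute (ρ ^ x) (σ ^ y) :=
    ((h.cfc_nnreal _).symm.cfc_nnreal _).symm
  have hfold : σ ^ s * ρ ^ r * σ ^ s = ρ ^ r * σ ^ (s + s) := by
    rw [← (hcomm r s).eq, mul_assoc, CFC.rpow_add hσ.isUnit]
  have hr_mul : r * z = α := div_mul_cancel₀ α hz
  have hs_add : s + s = (1 - α) / z := by
    rw [hs]
    field_simp
    ring
  have hs_mul : (s + s) * z = 1 - α := by rw [hs_add, div_mul_cancel₀ _ hz]
  have hr_ne : r ≠ 0 := div_ne_zero hα₀ hz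
  have hs_ne : s + s ≠ 0 := hs_add ▸ div_ne_zero (sub_ne_zero.2 hα₁.symm) hz
  rw [alphaZTrace, hfold, mul_rpow_of_commute z (hρ.rpow ρ r) (hσ.rpow σ _) (hcomm _ _),
    CFC.rpow_rpow ρ r z hr_ne, CFC.rpow_rpow σ _ z hs_ne, hr_mul, hs_mul]

theorem eigenvalues_unitary_conj {U A : Matrix n n ℂ} (hU : U ∈ unitaryGroup n ℂ)
    (hA : A.IsHermitian) (hUA : (U * A * star U).IsHermitian) :
    hUA.eigenvalues = hA.eigenvalues := by
  rw [IsHermitian.eigenvalues_eq_eigenvalues_iff, charpoly_mul_comm, ← mul_assoc,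
    mem_unitaryGroup_iff'.1 hU, one_mul]

theorem sum_rpow_mul_rpow_le_alphaZTrace (hα₀ : α ≠ 0) (hα₁ : α ≠ 1) (hz : z ≠ 0)
    (hρ : ρ.PosDef) (hσ : σ.PosDef) {s t : Equiv.Perm n}
    (h : Antivary (fun i ↦ hρ.1.eigenvalues (s i) ^ α)
      (fun i ↦ hσ.1.eigenvalues (t i) ^ (1 - α))) :
    ∑ i, hρ.1.eigenvalues (s i) ^ α * hσ.1.eigenvalues (t i) ^ (1 - α) ≤ alphaZTrace ρ σ α z := by
  have hρ_pos := hρ.isStrictlyPositive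
  have hσ_pos := hσ.isStrictlyPositive
  obtain ⟨U, hU, hcomm, hle⟩ := exists_unitary_commute_reTrace_rpow_le hz
    (hσ_pos.rpow σ ((1 - α) / (2 * z))) (hρ_pos.rpow ρ (α / z))
  have hρ'_pos := isStrictlyPositive_unitary_conj hU hρ_pos
  rw [← unitary_conj_rpow hU hρ_pos] at hcomm hle
  set ρ' := U * ρ * star U
  have hcomm' : Commute ρ' σ :=
    commute_of_commute_rpow (div_ne_zero hα₀ hz) hρ'_pos
      (commute_of_commute_rpow (div_ne_zero (sub_ne_zero.2 hα₁.symm) (by simpa using hz))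
        hσ_pos hcomm).symm
  rw [← eigenvalues_unitary_conj hU hρ.1 hρ'_pos.posDef.1] at h ⊢
  calc ∑ i, hρ'_pos.posDef.1.eigenvalues (s i) ^ α * hσ.1.eigenvalues (t i) ^ (1 - α)
      ≤ (cfc (· ^ α : ℝ → ℝ) ρ' * cfc (· ^ (1 - α) : ℝ → ℝ) σ).trace.re :=
        sum_mul_le_re_trace_cfc_mul_cfc (f := (· ^ α)) (g := (· ^ (1 - α))) _ _ h
    _ = alphaZTrace ρ' σ α z := by
        rw [alphaZTrace_of_commute hα₀ hα₁ hz hρ'_pos hσ_pos hcomm', reTrace_apply,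
          CFC.rpow_eq_cfc_real, CFC.rpow_eq_cfc_real]
    _ ≤ alphaZTrace ρ σ α z := hle

theorem exists_unitary_alphaZTrace_eq_sum (hα₀ : α ≠ 0) (hα₁ : α ≠ 1) (hz : z ≠ 0)
    (hρ : ρ.PosDef) (hσ : σ.PosDef) (s t : Equiv.Perm n) :
    ∃ U ∈ unitaryGroup n ℂ, alphaZTrace ρ (U * σ * star U) α z =
      ∑ i, hρ.1.eigenvalues (s i) ^ α * hσ.1.eigenvalues (t i) ^ (1 - α) := by
  have hρ_pos := hρ.isStrictlyPositive
  have hσ_pos := hσ.isStrictlyPositive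
  obtain ⟨U, hU, hcomm, htrace⟩ :=
    exists_unitary_commute_conj_trace_cfc_mul_cfc_eq_sum hρ.1 hσ.1 (s.symm.trans t)
  refine ⟨U, hU, ?_⟩
  rw [alphaZTrace_of_commute hα₀ hα₁ hz hρ_pos (isStrictlyPositive_unitary_conj hU hσ_pos) hcomm,
    unitary_conj_rpow hU hσ_pos, CFC.rpow_eq_cfc_real, CFC.rpow_eq_cfc_real, reTrace_apply, htrace,
    ← Equiv.sum_comp s]
  simp

end AlphaZ

section Fidelity

open scoped MatrixOrder Matrix.Norms.L2Operator

variable {d : ℕ} {ρ σ : Matrix (Fin d) (Fin d) ℂ}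

theorem mpow_eq_rpow (hρ : IsStrictlyPositive ρ) (t : ℝ) : mpow ρ t = ρ ^ t := by
  rw [mpow, dif_pos hρ.posDef.1, CFC.rpow_eq_cfc_real, cfc_eq_conj_diagonal hρ.posDef.1]
  rfl

theorem Faz_eq_alphaZTrace_rpow (hρ : IsStrictlyPositive ρ) (hσ : IsStrictlyPositive σ) (α z : ℝ) :
    Faz ρ σ α z = alphaZTrace ρ σ α z ^ (1 / α) := by
  have hσ_rpow := hσ.rpow σ ((1 - α) / (2 * z))
  rw [Faz, mpow_eq_rpow hρ, mpow_eq_rpow hσ, mpow_eq_rpow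
    (isStrictlyPositive_conj hσ_rpow.isUnit hσ_rpow.isSelfAdjoint (hρ.rpow ρ _))]
  rfl

theorem antivary_sortDown_rpow_sortUp_rpow {p q : Fin d → ℝ} (hp : ∀ i, 0 ≤ p i)
    (hq : ∀ i, 0 ≤ q i) {a b : ℝ} (ha : 0 ≤ a) (hb : 0 ≤ b) :
    Antivary (fun i ↦ sortDown p i ^ a) (fun i ↦ sortUp q i ^ b) := by
  refine Antitone.antivary (fun i j hij ↦ ?_) (fun i j hij ↦ ?_)
  · exact Real.rpow_le_rpow (hp _) (Tuple.monotone_sort p (Fin.rev_le_rev.2 hij)) ha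
  · exact Real.rpow_le_rpow (hq _) (Tuple.monotone_sort q hij) hb

theorem FazC_eigDown_eigUp_le_Faz {α z : ℝ} (hα : α ∈ Set.Ioo (0 : ℝ) 1) (hz : z ≠ 0)
    (hρ : ρ.PosDef) (hσ : σ.PosDef) : FazC (eigDown hρ.1) (eigUp hσ.1) α ≤ Faz ρ σ α z := by
  rw [Faz_eq_alphaZTrace_rpow hρ.isStrictlyPositive hσ.isStrictlyPositive]
  refine Real.rpow_le_rpow (Finset.sum_nonneg fun i _ ↦ ?_) ?_ (one_div_nonneg.2 hα.1.le)
  · exact mul_nonneg (Real.rpow_nonneg (hρ.eigenvalues_pos _).le _)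
      (Real.rpow_nonneg (hσ.eigenvalues_pos _).le _)
  · exact sum_rpow_mul_rpow_le_alphaZTrace (s := Fin.revPerm.trans (Tuple.sort hρ.1.eigenvalues))
      (t := Tuple.sort hσ.1.eigenvalues) hα.1.ne' hα.2.ne hz hρ hσ
      (antivary_sortDown_rpow_sortUp_rpow (fun i ↦ (hρ.eigenvalues_pos i).le)
        (fun i ↦ (hσ.eigenvalues_pos i).le) hα.1.le (sub_nonneg.2 hα.2.le))

theorem exists_unitary_Faz_eq_FazC {α z : ℝ} (hα₀ : α ≠ 0) (hα₁ : α ≠ 1) (hz : z ≠ 0)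
    (hρ : ρ.PosDef) (hσ : σ.PosDef) :
    ∃ U ∈ unitaryGroup (Fin d) ℂ,
      Faz ρ (U * σ * star U) α z = FazC (eigDown hρ.1) (eigUp hσ.1) α := by
  obtain ⟨U, hU, hsum⟩ := exists_unitary_alphaZTrace_eq_sum hα₀ hα₁ hz hρ hσ
    (Fin.revPerm.trans (Tuple.sort hρ.1.eigenvalues)) (Tuple.sort hσ.1.eigenvalues)
  refine ⟨U, hU, ?_⟩
  rw [Faz_eq_alphaZTrace_rpow hρ.isStrictlyPositive
    (isStrictlyPositive_unitary_conj hU hσ.isStrictlyPositive), hsum]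
  rfl

theorem stmt_2_general {d : ℕ} (ρ σ : Matrix (Fin d) (Fin d) ℂ) (hρ : ρ.PosDef) (hσ : σ.PosDef)
    (α z : ℝ) (hα : α ∈ Set.Ioo (0 : ℝ) 1) (hz : z ≠ 0) :
    IsLeast {x : ℝ | ∃ U ∈ Matrix.unitaryGroup (Fin d) ℂ, x = Faz ρ (U * σ * star U) α z}
      (FazC (eigDown hρ.1) (eigUp hσ.1) α) := by
  refine ⟨?_, ?_⟩
  · obtain ⟨U, hU, hFaz⟩ := exists_unitary_Faz_eq_FazC hα.1.ne' hα.2.ne hz hρ hσ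
    exact ⟨U, hU, hFaz.symm⟩
  · rintro _ ⟨U, hU, rfl⟩
    have hUσ : (U * σ * star U).PosDef :=
      (isStrictlyPositive_unitary_conj hU hσ.isStrictlyPositive).posDef
    have heig : eigUp hUσ.1 = eigUp hσ.1 :=
      congrArg sortUp (eigenvalues_unitary_conj hU hσ.1 hUσ.1)
    exact heig ▸ FazC_eigDown_eigUp_le_Faz hα hz hρ hUσ

end Fidelity

/-- for positive definite density matrices `ρ, σ`, `α ∈ (0,1)` and `z ∈ (0,1)`,
the minimum of `F_{α,z}(ρ, UσU*)` over unitaries `U` is `F_α^C(λ↓(ρ), λ↑(σ))`, attained. -/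
theorem stmt_2 {d : ℕ} (ρ σ : Matrix (Fin d) (Fin d) ℂ)
    (hρ : ρ.PosDef) (hσ : σ.PosDef) (hρ1 : ρ.trace = 1) (hσ1 : σ.trace = 1)
    (α z : ℝ) (hα : α ∈ Set.Ioo (0 : ℝ) 1) (hz : z ∈ Set.Ioo (0 : ℝ) 1) :
    IsLeast {x : ℝ | ∃ U ∈ Matrix.unitaryGroup (Fin d) ℂ,
        x = Faz ρ (U * σ * star U) α z}
      (FazC (eigDown hρ.1) (eigUp hσ.1) α) :=
  stmt_2_general ρ σ hρ hσ α z hα hz.1.ne'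
end

section
/- Let ρ and σ be positive definite d×d density matrices, and let (α,z) satisfy either 1 < α ≤ 2 with α/2 ≤ z ≤ α, or 2 ≤ α < ∞ with α−1 ≤ z ≤ α. Then the minimum of F_{α,z}(ρ, UσU*) over all d×d unitary matrices U equals F_α^C(λ↓(ρ), λ↓(σ)), and this minimum is attained at a unitary that simultaneously diagonalizes ρ and UσU* with both eigenvalue lists in decreasing order. -/
open Matrix
open scoped ComplexOrder

/-!
Let `a`, `q` be decreasing, `V`, `W` unitary, `Q = V diag(q) V*`, and let `c` be the eigenvalues of
`C = Q⁻¹ W diag(a) W* Q⁻¹`. For `t > 0` let `max(C, t)` be obtained from `C` by functional calculus.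
Then `M = Q max(C, t) Q` dominates both `Q C Q = W diag(a) W*` and `t Q²`, so Weyl's monotonicity
theorem gives `∏ max(aᵢ, t qᵢ²) ≤ det M = ∏ qᵢ² ∏ max(cᵢ, t)`, that is,
`∏ max(aᵢ / qᵢ², t) ≤ ∏ max(cᵢ, t)`. Taking logarithms and integrating in `t` with the layer-cake
formula `x ^ z = ∫ z² t ^ (z - 1) log⁺(x / t) dt` yields `∑ (aᵢ / qᵢ²) ^ z ≤ tr (C ^ z)`.
The fidelity is the case `a = r ^ (α / z)`, `q = s ^ ((α - 1) / (2 z))`, where `r` and `s` are the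
decreasing spectra of `ρ` and `σ`; equality holds when `V = W`.
-/

section PowerSums

open Real Set MeasureTheory

lemma continuousOn_log_mul_rpow {z : ℝ} (hz : 0 < z) :
    ContinuousOn (fun t => log t * t ^ z) (Ici 0) := by
  rintro t (ht : 0 ≤ t)
  rcases ht.eq_or_lt with rfl | ht
  · refine continuousWithinAt_Ioi_iff_Ici.mp ?_
    simpa [ContinuousWithinAt] using tendsto_log_mul_rpow_nhdsGT_zero hz
  · exact ((continuousAt_log ht.ne').mul (continuousAt_rpow_const t z (.inl ht.ne')))
      |>.continuousWithinAt

lemma hasDerivAt_rpow_mul_log_sub (z x : ℝ) {t : ℝ} (ht : 0 < t) :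
    HasDerivAt (fun t => t ^ z * (z * log x + 1) - z * (log t * t ^ z))
      (z ^ 2 * t ^ (z - 1) * (log x - log t)) t := by
  have hpow := hasDerivAt_rpow_const (p := z) (.inl ht.ne')
  refine ((hpow.mul_const _).sub (((hasDerivAt_log ht.ne').mul hpow).const_mul z)).congr_deriv ?_
  rw [show t ^ z = t * t ^ (z - 1) by rw [rpow_sub_one ht.ne', mul_div_cancel₀ _ ht.ne']]
  field_simp
  ring

lemma posLog_div_eq_zero {x t : ℝ} (hx : 0 ≤ x) (hxt : x < t) : log⁺ (x / t) = 0 := by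
  have ht := hx.trans_lt hxt
  rw [posLog_eq_zero_iff, abs_of_nonneg (by positivity)]
  exact div_le_one_of_le₀ hxt.le ht.le

lemma posLog_div_eq_log_sub_log {x t : ℝ} (ht : 0 < t) (htx : t ≤ x) :
    log⁺ (x / t) = log x - log t := by
  rw [posLog_eq_log (((one_le_div ht).mpr htx).trans (le_abs_self _)),
    log_div (ht.trans_le htx).ne' ht.ne']

lemma integrableOn_and_integral_rpow_mul_posLog_div {x z : ℝ} (hx : 0 ≤ x) (hz : 0 < z) :
    IntegrableOn (fun t => z ^ 2 * t ^ (z - 1) * log⁺ (x / t)) (Ioi 0) ∧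
      ∫ t in Ioi 0, z ^ 2 * t ^ (z - 1) * log⁺ (x / t) = x ^ z := by
  have hsupp : ∀ t ∈ Ioi (0 : ℝ) \ Ioc 0 x, z ^ 2 * t ^ (z - 1) * log⁺ (x / t) = 0 := by
    rintro t ⟨ht, htx⟩
    rw [posLog_div_eq_zero hx (not_le.mp fun h => htx ⟨ht, h⟩), mul_zero]
  have hlog : EqOn (fun t => z ^ 2 * t ^ (z - 1) * log⁺ (x / t))
      (fun t => z ^ 2 * t ^ (z - 1) * (log x - log t)) (Ioc 0 x) := fun t ht => by
    simp only [posLog_div_eq_log_sub_log ht.1 ht.2]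
  have hcont : ContinuousOn (fun t => t ^ z * (z * log x + 1) - z * (log t * t ^ z)) (Icc 0 x) :=
    ((continuous_rpow_const hz.le).mul_const _).continuousOn.sub
      (((continuousOn_log_mul_rpow hz).mono Icc_subset_Ici_self).const_mul z)
  have hint : IntegrableOn (fun t => z ^ 2 * t ^ (z - 1) * (log x - log t)) (Ioc 0 x) :=
    intervalIntegral.integrableOn_deriv_of_nonneg hcont
      (fun t ht => hasDerivAt_rpow_mul_log_sub z x ht.1) fun t ht =>
        mul_nonneg (mul_nonneg (sq_nonneg z) (rpow_nonneg ht.1.le _))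
          (sub_nonneg.mpr (log_le_log ht.1 ht.2.le))
  refine ⟨((integrableOn_congr_fun hlog measurableSet_Ioc).mpr hint).of_forall_sdiff_eq_zero
    measurableSet_Ioi hsupp, ?_⟩
  rw [setIntegral_eq_of_subset_of_forall_sdiff_eq_zero measurableSet_Ioi Ioc_subset_Ioi_self hsupp,
    setIntegral_congr_fun measurableSet_Ioc hlog, ← intervalIntegral.integral_of_le hx,
    intervalIntegral.integral_eq_sub_of_hasDerivAt_of_le hx hcont
      (fun t ht => hasDerivAt_rpow_mul_log_sub z x ht.1)
      ((intervalIntegrable_iff_integrableOn_Ioc_of_le hx).mpr hint)]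
  simp only [zero_rpow hz.ne']
  ring

variable {ι : Type*} [Fintype ι]

lemma sum_posLog_div {x : ι → ℝ} (hx : ∀ i, 0 ≤ x i) {t : ℝ} (ht : 0 < t) :
    ∑ i, log⁺ (x i / t) = log (∏ i, max (x i) t) - Fintype.card ι * log t := by
  have hmax (i : ι) : log⁺ (x i / t) = log (max (x i) t) - log t := by
    rw [posLog_eq_log_max_one (div_nonneg (hx i) ht.le), max_comm,
      ← log_div (ht.trans_le (le_max_right _ _)).ne' ht.ne', ← max_div_div_right ht.le,
      div_self ht.ne']
  simp only [hmax, Finset.sum_sub_distrib, Finset.sum_const, Finset.card_univ, nsmul_eq_mul]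
  rw [log_prod fun i _ => (ht.trans_le (le_max_right _ _)).ne']

lemma sum_rpow_le_sum_rpow_of_prod_max_le {x y : ι → ℝ} (hx : ∀ i, 0 ≤ x i) (hy : ∀ i, 0 ≤ y i)
    {z : ℝ} (hz : 0 < z) (h : ∀ t, 0 < t → ∏ i, max (x i) t ≤ ∏ i, max (y i) t) :
    ∑ i, x i ^ z ≤ ∑ i, y i ^ z := by
  have hlayer {w : ι → ℝ} (hw : ∀ i, 0 ≤ w i) :
      IntegrableOn (fun t => z ^ 2 * t ^ (z - 1) * ∑ i, log⁺ (w i / t)) (Ioi 0) ∧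
        ∑ i, w i ^ z = ∫ t in Ioi 0, z ^ 2 * t ^ (z - 1) * ∑ i, log⁺ (w i / t) := by
    have hi (i : ι) := integrableOn_and_integral_rpow_mul_posLog_div (hw i) hz
    simp only [Finset.mul_sum]
    refine ⟨integrable_finsetSum _ fun i _ => (hi i).1, ?_⟩
    rw [integral_finsetSum _ fun i _ => (hi i).1]
    exact Finset.sum_congr rfl fun i _ => (hi i).2.symm
  rw [(hlayer hx).2, (hlayer hy).2]
  refine setIntegral_mono_on (hlayer hx).1 (hlayer hy).1 measurableSet_Ioi fun t ht => ?_
  have hprod : 0 < ∏ i, max (x i) t := Finset.prod_pos fun i _ => lt_max_of_lt_right ht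
  rw [sum_posLog_div hx ht, sum_posLog_div hy ht]
  exact mul_le_mul_of_nonneg_left (sub_le_sub_right (log_le_log hprod (h t ht)) _)
    (mul_nonneg (sq_nonneg z) (rpow_nonneg (le_of_lt ht) _))

end PowerSums

section ConjDiagonal

open scoped MatrixOrder

variable {n 𝕜 : Type*} [Fintype n] [DecidableEq n] [RCLike 𝕜]

/-- `x ↦ W diag(x) W*`, as a homomorphism of real star algebras. Its values are the Hermitian
matrices with orthonormal eigenbasis the columns of `W` and eigenvalues `x`, not necessarily
ordered. -/
noncomputable def conjDiagonal (W : unitaryGroup n 𝕜) : (n → ℝ) →⋆ₐ[ℝ] Matrix n n 𝕜 where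
  toAlgHom := ((Unitary.conjStarAlgAut 𝕜 _ W).toAlgEquiv.toAlgHom.restrictScalars ℝ).comp
    ((diagonalAlgHom ℝ).comp (RCLike.ofRealAm.compLeft n))
  map_star' x := by
    change W * diagonal (fun i => (x i : 𝕜)) * star (W : Matrix n n 𝕜) =
      star (W * diagonal (fun i => (x i : 𝕜)) * star (W : Matrix n n 𝕜))
    simp [star_eq_conjTranspose, diagonal_conjTranspose, Pi.star_def, mul_assoc]

lemma conjDiagonal_apply (W : unitaryGroup n 𝕜) (x : n → ℝ) :
    conjDiagonal W x = W * diagonal (fun i => (x i : 𝕜)) * star (W : Matrix n n 𝕜) := rfl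

lemma mul_conjDiagonal_mul_star (U W : unitaryGroup n 𝕜) (x : n → ℝ) :
    (U : Matrix n n 𝕜) * conjDiagonal W x * star (U : Matrix n n 𝕜) = conjDiagonal (U * W) x := by
  simp [conjDiagonal_apply, mul_assoc]

lemma isSelfAdjoint_conjDiagonal (W : unitaryGroup n 𝕜) (x : n → ℝ) :
    IsSelfAdjoint (conjDiagonal W x) :=
  (IsSelfAdjoint.all x).map _

lemma conjDiagonal_mono (W : unitaryGroup n 𝕜) : Monotone (conjDiagonal W) := fun x y hxy => by
  rw [le_iff, ← map_sub, conjDiagonal_apply]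
  refine PosSemidef.mul_mul_conjTranspose_same (posSemidef_diagonal_iff.mpr fun i => ?_) _
  simpa using hxy i

lemma trace_conjDiagonal (W : unitaryGroup n 𝕜) (x : n → ℝ) :
    (conjDiagonal W x).trace = ((∑ i, x i : ℝ) : 𝕜) := by
  rw [conjDiagonal_apply, trace_mul_comm, ← mul_assoc, Unitary.coe_star_mul_self, one_mul,
    trace_diagonal, RCLike.ofReal_sum]

lemma det_conjDiagonal (W : unitaryGroup n 𝕜) (x : n → ℝ) :
    (conjDiagonal W x).det = ((∏ i, x i : ℝ) : 𝕜) := by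
  rw [conjDiagonal_apply, det_mul_comm, ← mul_assoc, Unitary.coe_star_mul_self, one_mul,
    det_diagonal, RCLike.ofReal_prod]

lemma cfc_conjDiagonal (W : unitaryGroup n 𝕜) (f : ℝ → ℝ) (x : n → ℝ) :
    cfc f (conjDiagonal W x) = conjDiagonal W (f ∘ x) := by
  set p := Lagrange.interpolate (Finset.univ.image x) id f
  have hp (i : n) : p.eval (x i) = f (x i) :=
    Lagrange.eval_interpolate_at_node f Function.injective_id.injOn
      (Finset.mem_image_of_mem x (Finset.mem_univ i))
  have hspec : (spectrum ℝ (conjDiagonal W x)).EqOn f p.eval := fun t ht => by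
    obtain ⟨i, hi⟩ := Set.mem_iUnion.mp <|
      (Pi.spectrum_eq (R := ℝ) x).subset (AlgHom.spectrum_apply_subset (conjDiagonal W) x ht)
    rw [← Algebra.algebraMap_self_apply (R := ℝ) (x i), spectrum.scalar_eq] at hi
    subst hi
    exact (hp i).symm
  calc cfc f (conjDiagonal W x)
    _ = Polynomial.aeval (conjDiagonal W x) p := by
      rw [cfc_congr hspec, cfc_polynomial p _ (isSelfAdjoint_conjDiagonal W x)]
    _ = conjDiagonal W (Polynomial.aeval x p) :=
      Polynomial.aeval_algHom_apply (conjDiagonal W) x p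
    _ = conjDiagonal W (f ∘ x) := by
      congr 1
      ext i
      simp [← hp]

lemma eq_conjDiagonal_eigenvalues {A : Matrix n n 𝕜} (hA : A.IsHermitian) :
    A = conjDiagonal hA.eigenvectorUnitary hA.eigenvalues :=
  hA.spectral_theorem

lemma exists_conjDiagonal_eq_comp_perm (W : unitaryGroup n 𝕜) (x : n → ℝ) (e : Equiv.Perm n) :
    ∃ V : unitaryGroup n 𝕜, conjDiagonal W x = conjDiagonal V (x ∘ e) := by
  have hstar : star ((W : Matrix n n 𝕜).submatrix id e) =
      (star (W : Matrix n n 𝕜)).submatrix e id := by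
    simp only [star_eq_conjTranspose, conjTranspose_submatrix]
  have hunit : (W : Matrix n n 𝕜).submatrix id e ∈ unitaryGroup n 𝕜 := by
    rw [mem_unitaryGroup_iff, hstar, submatrix_mul_equiv, submatrix_id_id]
    exact mem_unitaryGroup_iff.mp W.2
  have hdiag : diagonal (fun i => ((x ∘ e) i : 𝕜)) =
      (diagonal fun i => (x i : 𝕜)).submatrix e e :=
    (submatrix_diagonal_equiv (fun i => (x i : 𝕜)) e).symm
  refine ⟨⟨_, hunit⟩, ?_⟩
  simp only [conjDiagonal_apply]
  rw [hstar, hdiag, submatrix_mul_equiv, submatrix_mul_equiv, submatrix_id_id]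

lemma star_dotProduct_conjDiagonal_mulVec (V : unitaryGroup n 𝕜) (x : n → ℝ) (u : n → 𝕜) :
    star u ⬝ᵥ (conjDiagonal V x *ᵥ u) =
      ((∑ i, x i * ‖(star (V : Matrix n n 𝕜) *ᵥ u) i‖ ^ 2 : ℝ) : 𝕜) := by
  have hstar : star u ᵥ* (V : Matrix n n 𝕜) = star (star (V : Matrix n n 𝕜) *ᵥ u) := by
    rw [star_mulVec, star_eq_conjTranspose, conjTranspose_conjTranspose]
  rw [conjDiagonal_apply, ← mulVec_mulVec, ← mulVec_mulVec, dotProduct_mulVec, hstar]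
  simp only [dotProduct, mulVec_diagonal, Pi.star_apply, RCLike.star_def]
  push_cast
  exact Finset.sum_congr rfl fun i _ => by rw [← RCLike.conj_mul]; ring

lemma sum_mul_norm_sq_le_of_conjDiagonal_le {W V : unitaryGroup n 𝕜} {x y : n → ℝ}
    (h : conjDiagonal W x ≤ conjDiagonal V y) (c : n → 𝕜) :
    ∑ i, x i * ‖c i‖ ^ 2 ≤ ∑ i, y i * ‖((star V * W : unitaryGroup n 𝕜) *ᵥ c) i‖ ^ 2 := by
  have hquad := (le_iff.mp h).dotProduct_mulVec_nonneg (W *ᵥ c)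
  rw [sub_mulVec, dotProduct_sub, star_dotProduct_conjDiagonal_mulVec,
    star_dotProduct_conjDiagonal_mulVec, mulVec_mulVec, mulVec_mulVec,
    Unitary.coe_star_mul_self, one_mulVec] at hquad
  exact_mod_cast sub_nonneg.mp hquad

end ConjDiagonal

section Weyl

open scoped MatrixOrder

variable {n 𝕜 : Type*} [Fintype n] [LinearOrder n]

lemma exists_ne_zero_eq_zero_of_gt_mulVec_eq_zero_of_lt {R : Type*} [CommRing R] [IsDomain R]
    (S : Matrix n n R) (i : n) :
    ∃ c ≠ 0, (∀ j, i < j → c j = 0) ∧ ∀ j < i, (S *ᵥ c) j = 0 := by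
  let T : Matrix n n R := of fun j => if j < i then S j else if i < j then Pi.single j 1 else 0
  have hdet : T.det = 0 := det_eq_zero_of_row_eq_zero i fun k => by simp [T]
  obtain ⟨c, hc0, hc⟩ := exists_mulVec_eq_zero_iff.mpr hdet
  refine ⟨c, hc0, fun j hj => ?_, fun j hj => ?_⟩
  · simpa [T, mulVec, hj, hj.le, hj.not_gt] using congrFun hc j
  · simpa [T, mulVec, hj] using congrFun hc j

variable [RCLike 𝕜]

lemma le_of_conjDiagonal_le {W V : unitaryGroup n 𝕜} {x y : n → ℝ} (hx : Antitone x)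
    (hy : Antitone y) (h : conjDiagonal W x ≤ conjDiagonal V y) : x ≤ y := by
  intro i
  by_contra! hlt
  -- Evaluate both forms at `W c`: after a shift by `y i`, only the coordinates `j ≤ i`, of positive
  -- weight, contribute on the left, and only the `j ≥ i`, of nonpositive weight, on the right.
  obtain ⟨c, hc0, hc_gt, hc_lt⟩ := exists_ne_zero_eq_zero_of_gt_mulVec_eq_zero_of_lt
    (star V * W : unitaryGroup n 𝕜).1 i
  have hshift : conjDiagonal W (x - algebraMap ℝ _ (y i)) ≤
      conjDiagonal V (y - algebraMap ℝ _ (y i)) := by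
    simpa only [map_sub, AlgHomClass.commutes] using sub_le_sub_right h _
  obtain ⟨k, hk⟩ := Function.ne_iff.mp hc0
  have hki : k ≤ i := not_lt.mp fun hik => hk (hc_gt k hik)
  have hpos : 0 < ∑ j, (x j - y i) * ‖c j‖ ^ 2 := by
    refine Finset.sum_pos' (fun j _ => ?_) ⟨k, Finset.mem_univ k, ?_⟩
    · rcases lt_or_ge i j with hij | hji
      · simp [hc_gt j hij]
      · exact mul_nonneg (sub_nonneg.mpr (hlt.le.trans (hx hji))) (sq_nonneg _)
    · exact mul_pos (sub_pos.mpr (hlt.trans_le (hx hki))) (pow_pos (norm_pos_iff.mpr hk) 2)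
  have hneg : ∑ j, (y j - y i) * ‖((star V * W : unitaryGroup n 𝕜) *ᵥ c) j‖ ^ 2 ≤ 0 := by
    refine Finset.sum_nonpos fun j _ => ?_
    rcases lt_or_ge j i with hji | hij
    · rw [hc_lt j hji]
      simp
    · exact mul_nonpos_of_nonpos_of_nonneg (sub_nonpos.mpr (hy hij)) (sq_nonneg _)
  exact (hpos.trans_le (sum_mul_norm_sq_le_of_conjDiagonal_le hshift c)).not_ge hneg

end Weyl

section Spectrum

open scoped MatrixOrder

variable {d : ℕ}

lemma eigDown_antitone {A : Matrix (Fin d) (Fin d) ℂ} (hA : A.IsHermitian) :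
    Antitone (eigDown hA) := fun _ _ hij =>
  Tuple.monotone_sort hA.eigenvalues (Fin.rev_le_rev.mpr hij)

lemma exists_eq_conjDiagonal_eigDown {A : Matrix (Fin d) (Fin d) ℂ} (hA : A.IsHermitian) :
    ∃ V, A = conjDiagonal V (eigDown hA) := by
  obtain ⟨V, hV⟩ := exists_conjDiagonal_eq_comp_perm hA.eigenvectorUnitary hA.eigenvalues
    (Fin.revPerm.trans (Tuple.sort hA.eigenvalues))
  exact ⟨V, (eq_conjDiagonal_eigenvalues hA).trans hV⟩

lemma mpow_eq_cfc {A : Matrix (Fin d) (Fin d) ℂ} (hA : A.IsHermitian) (t : ℝ) :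
    mpow A t = cfc (fun x : ℝ => x ^ t) A := by
  rw [hA.cfc_eq, mpow, dif_pos hA]
  rfl

lemma mpow_conjDiagonal (W : unitaryGroup (Fin d) ℂ) (x : Fin d → ℝ) (t : ℝ) :
    mpow (conjDiagonal W x) t = conjDiagonal W fun i => x i ^ t := by
  rw [mpow_eq_cfc (isSelfAdjoint_conjDiagonal W x), cfc_conjDiagonal]
  rfl

lemma prod_max_le_det {V W : unitaryGroup (Fin d) ℂ} {a b : Fin d → ℝ} (ha : Antitone a)
    (hb : Antitone b) (hab : ∀ i, 0 ≤ max (a i) (b i)) {M : Matrix (Fin d) (Fin d) ℂ}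
    (haM : conjDiagonal W a ≤ M) (hbM : conjDiagonal V b ≤ M) :
    ((∏ i, max (a i) (b i) : ℝ) : ℂ) ≤ M.det := by
  have hM : M.IsHermitian := (isSelfAdjoint_conjDiagonal W a).of_ge haM
  obtain ⟨Z, hZ⟩ := exists_eq_conjDiagonal_eigDown hM
  rw [hZ] at haM hbM ⊢
  rw [det_conjDiagonal]
  exact Complex.real_le_real.mpr <| Finset.prod_le_prod (fun i _ => hab i) fun i _ =>
    max_le (le_of_conjDiagonal_le ha (eigDown_antitone hM) haM i)
      (le_of_conjDiagonal_le hb (eigDown_antitone hM) hbM i)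

lemma prod_max_div_sq_le_prod_max {V W E : unitaryGroup (Fin d) ℂ} {a q c : Fin d → ℝ}
    (ha : Antitone a) (hq : Antitone q) (hq0 : ∀ i, 0 < q i)
    (h : conjDiagonal V q * conjDiagonal E c * conjDiagonal V q = conjDiagonal W a)
    {t : ℝ} (ht : 0 < t) :
    ∏ i, max (a i / q i ^ 2) t ≤ ∏ i, max (c i) t := by
  set c' : Fin d → ℝ := fun i => max (c i) t
  set M := conjDiagonal V q * conjDiagonal E c' * conjDiagonal V q
  have hconj {x y : Fin d → ℝ} (hxy : x ≤ y) :
      conjDiagonal V q * conjDiagonal E x * conjDiagonal V q ≤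
        conjDiagonal V q * conjDiagonal E y * conjDiagonal V q :=
    (isSelfAdjoint_conjDiagonal V q).conjugate_le_conjugate (conjDiagonal_mono E hxy)
  have haM : conjDiagonal W a ≤ M := h ▸ hconj fun i => le_max_left _ _
  have htM : conjDiagonal V (t • q ^ 2) ≤ M := by
    have htq : conjDiagonal V (t • q ^ 2) =
        conjDiagonal V q * conjDiagonal E (t • 1) * conjDiagonal V q := by
      simp [sq]
    rw [htq]
    exact hconj fun i => by simp [c']
  have hdet : M.det = (((∏ i, q i ^ 2) * ∏ i, c' i : ℝ) : ℂ) := by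
    simp only [M, det_mul, det_conjDiagonal, Complex.coe_algebraMap, ← Complex.ofReal_mul]
    rw [Finset.prod_pow, sq, mul_right_comm]
  have hmax (i : Fin d) : max (a i) ((t • q ^ 2) i) = q i ^ 2 * max (a i / q i ^ 2) t := by
    have := hq0 i
    rw [mul_max_of_nonneg _ _ (by positivity), mul_div_cancel₀ _ (by positivity)]
    simp [mul_comm]
  have hsq : Antitone (t • q ^ 2) := fun i j hij =>
    mul_le_mul_of_nonneg_left (pow_le_pow_left₀ (hq0 j).le (hq hij) 2) ht.le
  have hpos (i : Fin d) : 0 < q i ^ 2 := pow_pos (hq0 i) 2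
  have key := prod_max_le_det ha hsq
    (fun i => hmax i ▸ mul_nonneg (hpos i).le (ht.le.trans (le_max_right _ _))) haM htM
  rw [hdet] at key
  simp only [hmax, Finset.prod_mul_distrib] at key
  exact le_of_mul_le_mul_left (Complex.real_le_real.mp key) (Finset.prod_pos fun i _ => hpos i)

lemma sum_div_sq_rpow_le_trace_mpow {V W : unitaryGroup (Fin d) ℂ} {a q : Fin d → ℝ}
    (ha : Antitone a) (ha0 : 0 ≤ a) (hq : Antitone q) (hq0 : ∀ i, 0 < q i) {z : ℝ} (hz : 0 < z) :
    ∑ i, (a i / q i ^ 2) ^ z ≤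
      (mpow (conjDiagonal V q⁻¹ * conjDiagonal W a * conjDiagonal V q⁻¹) z).trace.re := by
  set P := conjDiagonal V q⁻¹
  set Q := conjDiagonal V q
  set C := P * conjDiagonal W a * P
  have hQP : Q * P = 1 := by
    rw [← map_mul, ← map_one (conjDiagonal V)]
    congr 1
    ext i
    exact mul_inv_cancel₀ (hq0 i).ne'
  have hPQ : P * Q = 1 := mul_eq_one_comm.mp hQP
  have hC : C.PosSemidef := by
    have hA : 0 ≤ conjDiagonal W a := map_zero (conjDiagonal W) ▸ conjDiagonal_mono W ha0
    exact (IsSelfAdjoint.conjugate_nonneg hA (isSelfAdjoint_conjDiagonal V q⁻¹)).posSemidef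
  obtain ⟨E, c, hc0, hCE⟩ : ∃ E c, (∀ i, 0 ≤ c i) ∧ C = conjDiagonal E c :=
    ⟨_, _, hC.eigenvalues_nonneg, eq_conjDiagonal_eigenvalues hC.1⟩
  have hQCQ : Q * conjDiagonal E c * Q = conjDiagonal W a := by
    rw [← hCE]
    calc Q * (P * conjDiagonal W a * P) * Q = Q * P * conjDiagonal W a * (P * Q) := by
          simp only [mul_assoc]
      _ = conjDiagonal W a := by rw [hQP, hPQ, one_mul, mul_one]
  rw [hCE, mpow_conjDiagonal, trace_conjDiagonal]
  exact sum_rpow_le_sum_rpow_of_prod_max_le (fun i => div_nonneg (ha0 i) (sq_nonneg _)) hc0 hz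
    fun t ht => prod_max_div_sq_le_prod_max ha hq hq0 hQCQ ht

end Spectrum

section Fidelity

variable {d : ℕ} {α z : ℝ} {r s : Fin d → ℝ}

lemma rpow_div_sq_rpow {a b : ℝ} (ha : 0 ≤ a) (hb : 0 ≤ b) (hz : z ≠ 0) :
    (a ^ (α / z) / (b ^ ((α - 1) / (2 * z))) ^ 2) ^ z = a ^ α * b ^ (1 - α) := by
  rw [Real.div_rpow (Real.rpow_nonneg ha _) (sq_nonneg _), ← Real.rpow_mul_natCast hb,
    ← Real.rpow_mul ha, ← Real.rpow_mul hb, div_eq_mul_inv, ← Real.rpow_neg hb]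
  congr 2
  · field_simp
  · field_simp
    push_cast
    ring

lemma Faz_conjDiagonal_conjDiagonal (V W : unitaryGroup (Fin d) ℂ) (hs : ∀ i, 0 ≤ s i) :
    Faz (conjDiagonal W r) (conjDiagonal V s) α z =
      (mpow (conjDiagonal V (fun i => s i ^ ((α - 1) / (2 * z)))⁻¹ *
        conjDiagonal W (fun i => r i ^ (α / z)) *
        conjDiagonal V (fun i => s i ^ ((α - 1) / (2 * z)))⁻¹) z).trace.re ^ (1 / α) := by
  have hinv : (fun i => s i ^ ((1 - α) / (2 * z))) = (fun i => s i ^ ((α - 1) / (2 * z)))⁻¹ := by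
    ext i
    rw [Pi.inv_apply, ← Real.rpow_neg (hs i), ← neg_div, neg_sub]
  rw [Faz, mpow_conjDiagonal, mpow_conjDiagonal, hinv]

lemma Faz_conjDiagonal_self (W : unitaryGroup (Fin d) ℂ) (hr : ∀ i, 0 ≤ r i) (hs : ∀ i, 0 ≤ s i)
    (hz : z ≠ 0) : Faz (conjDiagonal W r) (conjDiagonal W s) α z = FazC r s α := by
  rw [Faz_conjDiagonal_conjDiagonal W W hs, ← map_mul (conjDiagonal W),
    ← map_mul (conjDiagonal W), mpow_conjDiagonal,
    trace_conjDiagonal, RCLike.ofReal_eq_complex_ofReal, Complex.ofReal_re, FazC]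
  congr 1
  refine Finset.sum_congr rfl fun i _ => ?_
  rw [← rpow_div_sq_rpow (hr i) (hs i) hz]
  congr 1
  simp only [Pi.mul_apply, Pi.inv_apply]
  ring

lemma FazC_le_Faz_conjDiagonal (V W : unitaryGroup (Fin d) ℂ) (hr : Antitone r)
    (hs : Antitone s) (hr0 : ∀ i, 0 ≤ r i) (hs0 : ∀ i, 0 < s i) (hα : 1 ≤ α) (hz : 0 < z) :
    FazC r s α ≤ Faz (conjDiagonal W r) (conjDiagonal V s) α z := by
  have hexp : 0 ≤ (α - 1) / (2 * z) := div_nonneg (sub_nonneg.mpr hα) (by positivity)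
  have ha : Antitone fun i => r i ^ (α / z) := fun i j hij =>
    Real.rpow_le_rpow (hr0 j) (hr hij) (by positivity)
  have hq : Antitone fun i => s i ^ ((α - 1) / (2 * z)) := fun i j hij =>
    Real.rpow_le_rpow (hs0 j).le (hs hij) hexp
  have key := sum_div_sq_rpow_le_trace_mpow (V := V) (W := W) ha
    (fun i => Real.rpow_nonneg (hr0 i) _) hq (fun i => Real.rpow_pos_of_pos (hs0 i) _) hz
  simp only [rpow_div_sq_rpow (hr0 _) (hs0 _).le hz.ne'] at key
  rw [Faz_conjDiagonal_conjDiagonal V W fun i => (hs0 i).le, FazC]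
  refine Real.rpow_le_rpow (Finset.sum_nonneg fun i _ => ?_) key (by positivity)
  exact mul_nonneg (Real.rpow_nonneg (hr0 i) _) (Real.rpow_nonneg (hs0 i).le _)

end Fidelity

theorem stmt_4_general {d : ℕ} {ρ σ : Matrix (Fin d) (Fin d) ℂ} (hρ : ρ.PosSemidef)
    (hσ : σ.PosDef) {α z : ℝ} (hα : 1 ≤ α) (hz : 0 < z) :
    IsLeast {x : ℝ | ∃ U ∈ Matrix.unitaryGroup (Fin d) ℂ, x = Faz ρ (U * σ * star U) α z}
      (FazC (eigDown hρ.1) (eigDown hσ.1) α) ∧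
    ∃ U ∈ Matrix.unitaryGroup (Fin d) ℂ, ∃ W ∈ Matrix.unitaryGroup (Fin d) ℂ,
      Faz ρ (U * σ * star U) α z = FazC (eigDown hρ.1) (eigDown hσ.1) α ∧
      ρ = W * Matrix.diagonal (fun i => ((eigDown hρ.1 i : ℝ) : ℂ)) * star W ∧
      U * σ * star U = W * Matrix.diagonal (fun i => ((eigDown hσ.1 i : ℝ) : ℂ)) * star W := by
  obtain ⟨W, hW⟩ := exists_eq_conjDiagonal_eigDown hρ.1
  obtain ⟨V, hV⟩ := exists_eq_conjDiagonal_eigDown hσ.1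
  have hr0 (i : Fin d) : 0 ≤ eigDown hρ.1 i := hρ.eigenvalues_nonneg _
  have hs0 (i : Fin d) : 0 < eigDown hσ.1 i := hσ.eigenvalues_pos _
  have hUσ (U : unitaryGroup (Fin d) ℂ) :
      (U : Matrix (Fin d) (Fin d) ℂ) * σ * star (U : Matrix (Fin d) (Fin d) ℂ) =
        conjDiagonal (U * V) (eigDown hσ.1) := by
    rw [← mul_conjDiagonal_mul_star, ← hV]
  have hFaz (U : unitaryGroup (Fin d) ℂ) :
      Faz ρ ((U : Matrix (Fin d) (Fin d) ℂ) * σ * star (U : Matrix (Fin d) (Fin d) ℂ)) α z =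
        Faz (conjDiagonal W (eigDown hρ.1)) (conjDiagonal (U * V) (eigDown hσ.1)) α z :=
    congrArg₂ (Faz · · α z) hW (hUσ U)
  set U₀ : unitaryGroup (Fin d) ℂ := W * star V
  have hU₀ : U₀ * V = W := by rw [mul_assoc, Unitary.star_mul_self, mul_one]
  have hmin := hFaz U₀
  rw [hU₀, Faz_conjDiagonal_self W hr0 (fun i => (hs0 i).le) hz.ne'] at hmin
  refine ⟨⟨⟨U₀, U₀.2, hmin.symm⟩, ?_⟩, U₀, U₀.2, W, W.2, hmin, hW, hU₀ ▸ hUσ U₀⟩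
  rintro _ ⟨U, hU, rfl⟩
  rw [hFaz ⟨U, hU⟩]
  exact FazC_le_Faz_conjDiagonal _ W (eigDown_antitone _) (eigDown_antitone _) hr0 hs0 hα hz

/-- for positive definite density matrices `ρ, σ` and `(α,z)` with
`1 < α ≤ 2, α/2 ≤ z ≤ α` or `2 ≤ α, α−1 ≤ z ≤ α`, the minimum of `F_{α,z}(ρ, UσU*)`
over unitaries is `F_α^C(λ↓(ρ), λ↓(σ))`, attained at a unitary `U` for which `ρ` and
`UσU*` are simultaneously diagonalized with both eigenvalue lists decreasing. -/
theorem stmt_4 {d : ℕ} (ρ σ : Matrix (Fin d) (Fin d) ℂ)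
    (hρ : ρ.PosDef) (hσ : σ.PosDef) (hρ1 : ρ.trace = 1) (hσ1 : σ.trace = 1)
    (α z : ℝ)
    (hαz : (1 < α ∧ α ≤ 2 ∧ α / 2 ≤ z ∧ z ≤ α) ∨ (2 ≤ α ∧ α - 1 ≤ z ∧ z ≤ α)) :
    IsLeast {x : ℝ | ∃ U ∈ Matrix.unitaryGroup (Fin d) ℂ,
        x = Faz ρ (U * σ * star U) α z}
      (FazC (eigDown hρ.1) (eigDown hσ.1) α) ∧
    ∃ U ∈ Matrix.unitaryGroup (Fin d) ℂ, ∃ W ∈ Matrix.unitaryGroup (Fin d) ℂ,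
      Faz ρ (U * σ * star U) α z = FazC (eigDown hρ.1) (eigDown hσ.1) α ∧
      ρ = W * Matrix.diagonal (fun i => ((eigDown hρ.1 i : ℝ) : ℂ)) * star W ∧
      U * σ * star U = W * Matrix.diagonal (fun i => ((eigDown hσ.1 i : ℝ) : ℂ)) * star W := by
  have hα : 1 ≤ α := by rcases hαz with h | h <;> linarith [h.1]
  have hz : 0 < z := by rcases hαz with ⟨_, _, _, _⟩ | ⟨_, _, _⟩ <;> linarith
  exact stmt_4_general hρ.posSemidef hσ hα hz
end
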